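/- arXiv:2008.02455 — 5 statements merged into one kernel-verified Lean document; each statement's English description precedes it below -/
import Mathlib

section
/- For the IMH chain, for every x ∈ ℝ^d and every n ≥ 1, ‖P^n(x,·) − π‖_TV ≥ R(x)^n, where R(x) is the rejection probability at x. -/
/-!
The chain started at `x` is still at `x` after `n` steps with probability at least `R(x) ^ n`, since
it may be rejected `n` times in a row. If `x` is not an atom of the reference measure then `{x}` is
null for `π`, so the event `{x}` alone already separates `Pⁿ(x, ·)` from `π` by `R(x) ^ n`. In
dimension `0` the only point is an atom, but its only proposal is itself, so `R(x) = 0`.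
-/

open MeasureTheory

/-- Total variation distance between two measures. -/
noncomputable def tvDist {X : Type*} [MeasurableSpace X] (μ ν : Measure X) : ℝ :=
  ⨆ A : {s : Set X // MeasurableSet s}, |(μ A.1).toReal - (ν A.1).toReal|

/-- `n`-step kernel (n-fold composition) of a Markov kernel. -/
noncomputable def kiter {X : Type*} [MeasurableSpace X] (P : X → Measure X) : ℕ → X → Measure X
  | 0, x => Measure.dirac x
  | (n + 1), x => (kiter P n x).bind P

/-- Weight function `w = π / p`. -/
noncomputable def imhW {X : Type*} (tgt prp : X → ℝ) (x : X) : ℝ := tgt x / prp x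

/-- Rejection probability of the IMH chain at `x`. -/
noncomputable def imhR {X : Type*} [MeasureSpace X] (tgt prp : X → ℝ) (x : X) : ℝ :=
  ∫ y, (1 - min (imhW tgt prp y / imhW tgt prp x) 1) * prp y

/-- The IMH transition kernel. -/
noncomputable def imhP {X : Type*} [MeasureSpace X] (tgt prp : X → ℝ) (x : X) : Measure X :=
  (volume : Measure X).withDensity
      (fun y => ENNReal.ofReal (prp y * min (imhW tgt prp y / imhW tgt prp x) 1))
    + ENNReal.ofReal (imhR tgt prp x) • Measure.dirac x

/-- The measure with density `f` with respect to Lebesgue measure. -/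
noncomputable def densityMeasure {X : Type*} [MeasureSpace X] (f : X → ℝ) : Measure X :=
  (volume : Measure X).withDensity fun y => ENNReal.ofReal (f y)

/-- Worst-case total variation distance from stationarity after `n` steps of the IMH chain. -/
noncomputable def dIMH {X : Type*} [MeasureSpace X] (tgt prp : X → ℝ) (n : ℕ) : ℝ :=
  ⨆ x, tvDist (kiter (imhP tgt prp) n x) (densityMeasure tgt)

section TotalVariation

variable {X : Type*} [MeasurableSpace X]

theorem tvDist_nonneg (μ ν : Measure X) : 0 ≤ tvDist μ ν :=
  Real.iSup_nonneg fun _ => abs_nonneg _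

theorem abs_measureReal_sub_le_tvDist (μ ν : Measure X) [IsFiniteMeasure μ] [IsFiniteMeasure ν]
    {s : Set X} (hs : MeasurableSet s) : |μ.real s - ν.real s| ≤ tvDist μ ν := by
  refine le_ciSup (f := fun A : {s : Set X // MeasurableSet s} => |μ.real A.1 - ν.real A.1|)
    ⟨μ.real Set.univ + ν.real Set.univ, ?_⟩ ⟨s, hs⟩
  rintro _ ⟨A, rfl⟩
  calc |μ.real A.1 - ν.real A.1|
      ≤ |μ.real A.1| + |ν.real A.1| := abs_sub _ _
    _ = μ.real A.1 + ν.real A.1 := by simp only [abs_of_nonneg measureReal_nonneg]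
    _ ≤ μ.real Set.univ + ν.real Set.univ :=
          add_le_add (measureReal_mono (Set.subset_univ _)) (measureReal_mono (Set.subset_univ _))

end TotalVariation

section Iteration

variable {X : Type*} [MeasurableSpace X] {P : X → Measure X}

theorem isProbabilityMeasure_kiter (hP : Measurable P) (hprob : ∀ y, IsProbabilityMeasure (P y))
    (n : ℕ) (x : X) : IsProbabilityMeasure (kiter P n x) := by
  induction n with
  | zero => exact Measure.dirac.isProbabilityMeasure
  | succ n ih =>
    exact isProbabilityMeasure_bind hP.aemeasurable (.of_forall hprob)

variable [MeasurableSingletonClass X]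

theorem pow_singleton_le_kiter_singleton (hP : Measurable P) (n : ℕ) (x : X) :
    P x {x} ^ n ≤ kiter P n x {x} := by
  induction n with
  | zero => simp [kiter]
  | succ n ih =>
    calc P x {x} ^ (n + 1)
        = P x {x} * P x {x} ^ n := pow_succ' _ _
      _ ≤ P x {x} * kiter P n x {x} := by gcongr
      _ = ∫⁻ y in {x}, P y {x} ∂kiter P n x := (lintegral_singleton (fun y => P y {x}) x).symm
      _ ≤ ∫⁻ y, P y {x} ∂kiter P n x := setLIntegral_le_lintegral _ _
      _ = kiter P (n + 1) x {x} :=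
          (Measure.bind_apply (measurableSet_singleton x) hP.aemeasurable).symm

theorem pow_singleton_le_tvDist_kiter (hP : Measurable P)
    (hprob : ∀ y, IsProbabilityMeasure (P y)) (ν : Measure X) [IsFiniteMeasure ν] {x : X}
    (hx : ν {x} = 0) (n : ℕ) : (P x).real {x} ^ n ≤ tvDist (kiter P n x) ν := by
  have := isProbabilityMeasure_kiter hP hprob n x
  calc (P x).real {x} ^ n
      = (P x {x} ^ n).toReal := (ENNReal.toReal_pow _ _).symm
    _ ≤ (kiter P n x).real {x} :=
        ENNReal.toReal_mono (measure_ne_top _ _) (pow_singleton_le_kiter_singleton hP n x)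
    _ ≤ |(kiter P n x).real {x} - ν.real {x}| := by
        rw [measureReal_def ν, hx, ENNReal.toReal_zero, sub_zero]
        exact le_abs_self _
    _ ≤ tvDist (kiter P n x) ν := abs_measureReal_sub_le_tvDist _ _ (measurableSet_singleton x)

end Iteration

section DensityMeasure

variable {X : Type*} [MeasureSpace X]

theorem densityMeasure_univ {f : X → ℝ} (hf : Integrable f) (hf_nonneg : ∀ x, 0 ≤ f x) :
    densityMeasure f Set.univ = ENNReal.ofReal (∫ x, f x) := by
  rw [densityMeasure, withDensity_apply _ .univ, Measure.restrict_univ,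
    ofReal_integral_eq_lintegral_ofReal hf (.of_forall hf_nonneg)]

theorem isProbabilityMeasure_densityMeasure {f : X → ℝ} (hf_nonneg : ∀ x, 0 ≤ f x)
    (hf_int : ∫ x, f x = 1) : IsProbabilityMeasure (densityMeasure f) where
  measure_univ := by
    rw [densityMeasure_univ (integrable_of_integral_eq_one hf_int) hf_nonneg, hf_int,
      ENNReal.ofReal_one]

theorem measurable_densityMeasure {Y : Type*} [MeasurableSpace Y] [SFinite (volume : Measure X)]
    {f : Y → X → ℝ} (hf : Measurable (Function.uncurry f)) :
    Measurable fun y => densityMeasure (f y) := by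
  refine Measure.measurable_of_measurable_coe _ fun s hs => ?_
  simp only [densityMeasure, withDensity_apply _ hs]
  exact hf.ennreal_ofReal.lintegral_prod_right'

end DensityMeasure

/-- The probability `α(x, y) = min (w(y) / w(x)) 1` with which the IMH chain at `x` accepts the
proposal `y`. The junk value `w(y) / 0 = 0` makes every proposal rejected from a point where the
target vanishes, in accordance with `imhP` and `imhR`. -/
noncomputable def imhAccept {X : Type*} (tgt prp : X → ℝ) (x y : X) : ℝ :=
  min (imhW tgt prp y / imhW tgt prp x) 1

section Acceptance

variable {X : Type*} {tgt prp : X → ℝ}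

theorem imhW_nonneg (htgt_nonneg : ∀ x, 0 ≤ tgt x) (hprp_nonneg : ∀ x, 0 ≤ prp x) (x : X) :
    0 ≤ imhW tgt prp x :=
  div_nonneg (htgt_nonneg x) (hprp_nonneg x)

theorem imhAccept_nonneg (htgt_nonneg : ∀ x, 0 ≤ tgt x) (hprp_nonneg : ∀ x, 0 ≤ prp x)
    (x y : X) : 0 ≤ imhAccept tgt prp x y :=
  le_min (div_nonneg (imhW_nonneg htgt_nonneg hprp_nonneg y)
    (imhW_nonneg htgt_nonneg hprp_nonneg x)) zero_le_one

theorem imhAccept_le_one (tgt prp : X → ℝ) (x y : X) : imhAccept tgt prp x y ≤ 1 :=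
  min_le_right _ _

theorem imhAccept_self {x : X} (htgt : tgt x ≠ 0) (hprp : prp x ≠ 0) :
    imhAccept tgt prp x x = 1 := by
  have hw : imhW tgt prp x ≠ 0 := div_ne_zero htgt hprp
  rw [imhAccept, div_self hw, min_self]

theorem measurable_uncurry_imhAccept [MeasurableSpace X] (htgt : Measurable tgt)
    (hprp : Measurable prp) : Measurable (Function.uncurry (imhAccept tgt prp)) := by
  unfold imhAccept imhW Function.uncurry
  fun_prop

end Acceptance

section Kernel

variable {X : Type*} [MeasureSpace X] {tgt prp : X → ℝ}

theorem imhR_nonneg (tgt : X → ℝ) (hprp_nonneg : ∀ x, 0 ≤ prp x) (x : X) :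
    0 ≤ imhR tgt prp x :=
  integral_nonneg fun y => mul_nonneg (sub_nonneg.2 (imhAccept_le_one tgt prp x y)) (hprp_nonneg y)

theorem imhR_eq_zero_of_subsingleton [Subsingleton X] {x : X} (htgt : tgt x ≠ 0)
    (hprp : prp x ≠ 0) : imhR tgt prp x = 0 := by
  refine integral_eq_zero_of_ae (.of_forall fun y => ?_)
  change (1 - imhAccept tgt prp x y) * prp y = 0
  rw [Subsingleton.elim y x, imhAccept_self htgt hprp, sub_self, zero_mul]

theorem imhP_eq_densityMeasure_add (tgt prp : X → ℝ) (x : X) :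
    imhP tgt prp x = densityMeasure (fun y => prp y * imhAccept tgt prp x y)
      + ENNReal.ofReal (imhR tgt prp x) • Measure.dirac x :=
  rfl

theorem integrable_mul_imhAccept (htgt : Measurable tgt) (hprp : Measurable prp)
    (htgt_nonneg : ∀ x, 0 ≤ tgt x) (hprp_nonneg : ∀ x, 0 ≤ prp x) (hprp_int : Integrable prp)
    (x : X) : Integrable fun y => prp y * imhAccept tgt prp x y := by
  refine hprp_int.mul_bdd (c := 1)
    (measurable_uncurry_imhAccept htgt hprp).of_uncurry_left.aestronglyMeasurable
    (.of_forall fun y => ?_)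
  rw [Real.norm_of_nonneg (imhAccept_nonneg htgt_nonneg hprp_nonneg x y)]
  exact imhAccept_le_one tgt prp x y

theorem integral_mul_imhAccept_add_imhR (htgt : Measurable tgt) (hprp : Measurable prp)
    (htgt_nonneg : ∀ x, 0 ≤ tgt x) (hprp_nonneg : ∀ x, 0 ≤ prp x) (hprp_int : Integrable prp)
    (x : X) : (∫ y, prp y * imhAccept tgt prp x y) + imhR tgt prp x = ∫ y, prp y := by
  have haccept := integrable_mul_imhAccept htgt hprp htgt_nonneg hprp_nonneg hprp_int x
  have hreject : imhR tgt prp x = ∫ y, (prp y - prp y * imhAccept tgt prp x y) :=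
    integral_congr_ae (.of_forall fun y => by simp only [imhAccept]; ring)
  rw [hreject, integral_sub hprp_int haccept, add_sub_cancel]

theorem isProbabilityMeasure_imhP (htgt : Measurable tgt) (hprp : Measurable prp)
    (htgt_nonneg : ∀ x, 0 ≤ tgt x) (hprp_nonneg : ∀ x, 0 ≤ prp x) (hprp_int : ∫ x, prp x = 1)
    (x : X) : IsProbabilityMeasure (imhP tgt prp x) where
  measure_univ := by
    have hint : Integrable prp := integrable_of_integral_eq_one hprp_int
    have hnonneg (y : X) : 0 ≤ prp y * imhAccept tgt prp x y :=
      mul_nonneg (hprp_nonneg y) (imhAccept_nonneg htgt_nonneg hprp_nonneg x y)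
    have haccept := integrable_mul_imhAccept htgt hprp htgt_nonneg hprp_nonneg hint x
    rw [imhP_eq_densityMeasure_add, Measure.add_apply, densityMeasure_univ haccept hnonneg,
      Measure.smul_apply, measure_univ, smul_eq_mul, mul_one,
      ← ENNReal.ofReal_add (integral_nonneg hnonneg) (imhR_nonneg tgt hprp_nonneg x),
      integral_mul_imhAccept_add_imhR htgt hprp htgt_nonneg hprp_nonneg hint x, hprp_int,
      ENNReal.ofReal_one]

theorem imhR_le_imhP_singleton (tgt prp : X → ℝ) (x : X) :
    ENNReal.ofReal (imhR tgt prp x) ≤ imhP tgt prp x {x} := by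
  rw [imhP_eq_densityMeasure_add, Measure.add_apply, Measure.smul_apply,
    Measure.dirac_apply_of_mem (Set.mem_singleton x), smul_eq_mul, mul_one]
  exact le_add_self

variable [SFinite (volume : Measure X)]

theorem measurable_imhR (htgt : Measurable tgt) (hprp : Measurable prp) :
    Measurable (imhR tgt prp) := by
  have hreject : Measurable fun q : X × X => (1 - imhAccept tgt prp q.1 q.2) * prp q.2 :=
    ((measurable_uncurry_imhAccept htgt hprp).const_sub 1).mul (hprp.comp measurable_snd)
  exact hreject.stronglyMeasurable.integral_prod_right'.measurable

theorem measurable_imhP (htgt : Measurable tgt) (hprp : Measurable prp) :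
    Measurable (imhP tgt prp) := by
  have haccept : Measurable fun x => densityMeasure fun y => prp y * imhAccept tgt prp x y :=
    measurable_densityMeasure
      ((hprp.comp measurable_snd).mul (measurable_uncurry_imhAccept htgt hprp))
  refine Measure.measurable_of_measurable_coe _ fun s hs => ?_
  simp only [imhP_eq_densityMeasure_add, Measure.add_apply, Measure.smul_apply, smul_eq_mul,
    Measure.dirac_apply' _ hs]
  exact (Measure.measurable_coe hs |>.comp haccept).add
    ((measurable_imhR htgt hprp).ennreal_ofReal.mul (measurable_one.indicator hs))

end Kernel

theorem volume_singleton_eq_zero_or_imhR_eq_zero {d : ℕ} {tgt prp : (Fin d → ℝ) → ℝ}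
    (htgt_int : ∫ y, tgt y ≠ 0) {x : Fin d → ℝ} (hprp : prp x ≠ 0) :
    volume {x} = 0 ∨ imhR tgt prp x = 0 := by
  rcases d with _ | d
  · have htgt : tgt x ≠ 0 := fun h => htgt_int <|
      integral_eq_zero_of_ae (.of_forall fun y => by rw [Subsingleton.elim y x, h, Pi.zero_apply])
    exact .inr (imhR_eq_zero_of_subsingleton htgt hprp)
  · exact .inl (measure_singleton x)

theorem imh_tv_lower_bound_rejection_general {X : Type*} [MeasureSpace X]
    [MeasurableSingletonClass X] [SFinite (volume : Measure X)] {tgt prp : X → ℝ}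
    (htgt : Measurable tgt) (hprp : Measurable prp)
    (htgt_nonneg : ∀ x, 0 ≤ tgt x) (hprp_pos : ∀ x, 0 < prp x)
    (htgt_int : ∫ x, tgt x = 1) (hprp_int : ∫ x, prp x = 1)
    {x : X} (hx : volume {x} = 0 ∨ imhR tgt prp x = 0) {n : ℕ} (hn : 1 ≤ n) :
    imhR tgt prp x ^ n ≤ tvDist (kiter (imhP tgt prp) n x) (densityMeasure tgt) := by
  rcases hx with hx | hR
  · have hprp_nonneg (y : X) : 0 ≤ prp y := (hprp_pos y).le
    have hprob := isProbabilityMeasure_imhP htgt hprp htgt_nonneg hprp_nonneg hprp_int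
    have := isProbabilityMeasure_densityMeasure htgt_nonneg htgt_int
    have hnull : densityMeasure tgt {x} = 0 := withDensity_absolutelyContinuous _ _ hx
    calc imhR tgt prp x ^ n
        ≤ (imhP tgt prp x).real {x} ^ n :=
          pow_le_pow_left₀ (imhR_nonneg tgt hprp_nonneg x)
            ((ENNReal.ofReal_le_iff_le_toReal (measure_ne_top _ _)).1
              (imhR_le_imhP_singleton tgt prp x)) n
      _ ≤ tvDist (kiter (imhP tgt prp) n x) (densityMeasure tgt) :=
          pow_singleton_le_tvDist_kiter (measurable_imhP htgt hprp) hprob _ hnull n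
  · rw [hR, zero_pow (Nat.one_le_iff_ne_zero.1 hn)]
    exact tvDist_nonneg _ _

/-- `‖Pⁿ(x,·) − π‖_TV ≥ R(x)ⁿ` for every `x` and every `n ≥ 1`. -/
theorem imh_tv_lower_bound_rejection (d : ℕ) (tgt prp : (Fin d → ℝ) → ℝ)
    (htgt_cont : Continuous tgt) (hprp_cont : Continuous prp)
    (htgt_nonneg : ∀ x, 0 ≤ tgt x) (hprp_pos : ∀ x, 0 < prp x)
    (htgt_int : (∫ x, tgt x) = 1) (hprp_int : (∫ x, prp x) = 1) :
    ∀ (x : Fin d → ℝ) (n : ℕ), 1 ≤ n →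
      (imhR tgt prp x) ^ n ≤ tvDist (kiter (imhP tgt prp) n x) (densityMeasure tgt) := by
  intro x n hn
  exact imh_tv_lower_bound_rejection_general htgt_cont.measurable hprp_cont.measurable htgt_nonneg
    hprp_pos htgt_int hprp_int
    (volume_singleton_eq_zero_or_imhR_eq_zero (htgt_int ▸ one_ne_zero) (hprp_pos x).ne') hn
end

section
/- For the IMH chain on the finite state space X = {1, …, m}, for every t ≥ 1, (1 − π₁)·(1 − 1/w*)^t ≤ d(t) ≤ (1 − 1/w*)^t, where w* = w₁. -/
/-- The IMH transition matrix on a finite state space, for target pmf `tgt` and proposal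
pmf `prp`: `P(i,j) = p_j·min(1, w_j/w_i)` for `j ≠ i` and
`P(i,i) = p_i + Σ_k p_k·max(0, 1 − w_k/w_i)`, where `w_i = π_i/p_i`. -/
noncomputable def imhMatrix {n : ℕ} (tgt prp : Fin n → ℝ) : Matrix (Fin n) (Fin n) ℝ :=
  Matrix.of fun i j =>
    if j = i then prp i + ∑ k, prp k * max 0 (1 - (tgt k / prp k) / (tgt i / prp i))
    else prp j * min 1 ((tgt j / prp j) / (tgt i / prp i))

/-- Total variation distance between two pmfs on a finite state space. -/
noncomputable def tvFin {n : ℕ} (μ ν : Fin n → ℝ) : ℝ := (1 / 2) * ∑ j, |μ j - ν j|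

/-!
Write `λ = 1 - 1 / w*`. Every row of `P` dominates `π / w*`, so `P` contracts the `ℓ¹` norm of
vectors of total mass zero by the factor `λ` (Doeblin). Applied to `δᵢ - π`, whose `ℓ¹` norm is
`2 (1 - πᵢ)`, this bounds the distance to `π` after `t` steps from `i` by `(1 - πᵢ) λ ^ t`. From a
state `z` of maximal weight a proposal `j` is accepted with probability exactly `w_j / w*`, so the
chain jumps to a `π`-distributed state with probability `1 / w*` and stays put otherwise. Hence
`δ_z - π` is a left eigenvector of `P` with eigenvalue `λ`, and from `z` the bound is attained.
-/

open Matrix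

section Contraction

variable {R ι κ : Type*} [Fintype ι]

theorem sum_vecMul_of_sum_row_eq_one [CommSemiring R] [Fintype κ] {P : Matrix ι κ R}
    (hP : ∀ i, ∑ j, P i j = 1) (v : ι → R) : ∑ j, (v ᵥ* P) j = ∑ i, v i := by
  simp only [vecMul_eq_sum, Finset.sum_apply, Pi.smul_apply, smul_eq_mul]
  rw [Finset.sum_comm]
  simp only [← Finset.mul_sum, hP, mul_one]

theorem vecMul_pow_eq_smul [CommSemiring R] [DecidableEq ι] {P : Matrix ι ι R} {v : ι → R}
    {c : R} (hv : v ᵥ* P = c • v) (t : ℕ) : v ᵥ* P ^ t = c ^ t • v := by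
  induction t with
  | zero => simp
  | succ t ih => rw [pow_succ, ← vecMul_vecMul, ih, smul_vecMul, hv, smul_smul, pow_succ]

variable [CommRing R]

theorem single_sub_vecMul_pow [DecidableEq ι] {P : Matrix ι ι R} {π : ι → R}
    (hπ : π ᵥ* P = π) (t : ℕ) (i : ι) :
    (Pi.single i 1 - π) ᵥ* P ^ t = (P ^ t) i - π := by
  have hπt : π ᵥ* P ^ t = π := by
    simpa using vecMul_pow_eq_smul (hπ.trans (one_smul R π).symm) t
  rw [sub_vecMul, single_one_vecMul, hπt]
  rfl

variable [LinearOrder R] [IsOrderedRing R]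

theorem sum_abs_vecMul_le_of_le_row [Fintype κ] {P : Matrix ι κ R} {ν : κ → R} {v : ι → R}
    (hP : ∀ i, ∑ j, P i j = 1) (hν : ∀ i j, ν j ≤ P i j) (hv : ∑ i, v i = 0) :
    ∑ j, |(v ᵥ* P) j| ≤ (1 - ∑ j, ν j) * ∑ i, |v i| := by
  -- As `v` has mass zero, `P` may be replaced by the nonnegative matrix `P - 1 ⊗ ν`.
  have hres (j : κ) : (v ᵥ* P) j = ∑ i, v i * (P i j - ν j) := by
    simp only [mul_sub, Finset.sum_sub_distrib, ← Finset.sum_mul, hv, zero_mul, sub_zero]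
    rfl
  calc ∑ j, |(v ᵥ* P) j|
      ≤ ∑ j, ∑ i, |v i| * (P i j - ν j) := by
        gcongr with j
        rw [hres]
        refine (Finset.abs_sum_le_sum_abs _ _).trans_eq (Finset.sum_congr rfl fun i _ => ?_)
        rw [abs_mul, abs_of_nonneg (sub_nonneg.2 (hν i j))]
    _ = ∑ i, |v i| * (1 - ∑ j, ν j) := by
        rw [Finset.sum_comm]
        simp only [← Finset.mul_sum, Finset.sum_sub_distrib, hP]
    _ = (1 - ∑ j, ν j) * ∑ i, |v i| := by rw [← Finset.sum_mul, mul_comm]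

theorem sum_abs_vecMul_pow_le_of_le_row [DecidableEq ι] {P : Matrix ι ι R} {ν v : ι → R}
    (hP : ∀ i, ∑ j, P i j = 1) (hν : ∀ i j, ν j ≤ P i j) (hv : ∑ i, v i = 0) (t : ℕ) :
    ∑ j, |(v ᵥ* P ^ t) j| ≤ (1 - ∑ j, ν j) ^ t * ∑ i, |v i| := by
  rcases isEmpty_or_nonempty ι with _ | ⟨⟨i₀⟩⟩
  · simp
  have hrate : 0 ≤ 1 - ∑ j, ν j :=
    sub_nonneg.2 ((Finset.sum_le_sum fun j _ => hν i₀ j).trans_eq (hP i₀))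
  induction t generalizing v with
  | zero => simp
  | succ t ih =>
    calc ∑ j, |(v ᵥ* P ^ (t + 1)) j|
        = ∑ j, |((v ᵥ* P) ᵥ* P ^ t) j| := by rw [pow_succ', vecMul_vecMul]
      _ ≤ (1 - ∑ j, ν j) ^ t * ∑ j, |(v ᵥ* P) j| :=
        ih ((sum_vecMul_of_sum_row_eq_one hP v).trans hv)
      _ ≤ (1 - ∑ j, ν j) ^ t * ((1 - ∑ j, ν j) * ∑ i, |v i|) := by
        gcongr
        exact sum_abs_vecMul_le_of_le_row hP hν hv
      _ = (1 - ∑ j, ν j) ^ (t + 1) * ∑ i, |v i| := by rw [pow_succ, mul_assoc]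

theorem sum_abs_single_sub [DecidableEq ι] {π : ι → R} (hπ : ∀ i, 0 ≤ π i) (hsum : ∑ i, π i = 1)
    (i : ι) : ∑ j, |(Pi.single i 1 - π : ι → R) j| = 2 * (1 - π i) := by
  have hle : π i ≤ 1 := hsum ▸ Finset.single_le_sum (fun k _ => hπ k) (Finset.mem_univ i)
  have habs (j : ι) : |(Pi.single i 1 - π : ι → R) j| =
      π j + (Pi.single i (1 - 2 * π i) : ι → R) j := by
    rcases eq_or_ne j i with rfl | hj
    · rw [Pi.sub_apply, Pi.single_eq_same, Pi.single_eq_same, abs_of_nonneg (sub_nonneg.2 hle)]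
      ring
    · simp [hj, abs_of_nonneg (hπ j)]
  simp only [habs, Finset.sum_add_distrib, hsum, Finset.sum_pi_single', Finset.mem_univ, if_true]
  ring

end Contraction

section TotalVariation

variable {n : ℕ} {P : Matrix (Fin n) (Fin n) ℝ} {π : Fin n → ℝ}

theorem tvFin_pow_row (hπP : π ᵥ* P = π) (t : ℕ) (i : Fin n) :
    tvFin ((P ^ t) i) π = 1 / 2 * ∑ j, |((Pi.single i 1 - π) ᵥ* P ^ t) j| := by
  simp only [single_sub_vecMul_pow hπP, tvFin, Pi.sub_apply]

theorem tvFin_pow_row_le {ν : Fin n → ℝ} (hP : ∀ i, ∑ j, P i j = 1) (hν : ∀ i j, ν j ≤ P i j)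
    (hπ : ∀ i, 0 ≤ π i) (hsum : ∑ i, π i = 1) (hπP : π ᵥ* P = π) (t : ℕ) (i : Fin n) :
    tvFin ((P ^ t) i) π ≤ (1 - π i) * (1 - ∑ j, ν j) ^ t := by
  have hmass : ∑ j, (Pi.single i 1 - π : Fin n → ℝ) j = 0 := by
    simp [Finset.sum_sub_distrib, hsum]
  have hcontr := sum_abs_vecMul_pow_le_of_le_row hP hν hmass t
  rw [sum_abs_single_sub hπ hsum] at hcontr
  rw [tvFin_pow_row hπP]
  linarith

theorem tvFin_pow_row_eq {c : ℝ} {i : Fin n} (hc : 0 ≤ c) (hπ : ∀ i, 0 ≤ π i)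
    (hsum : ∑ i, π i = 1) (hπP : π ᵥ* P = π) (hi : P i = c • Pi.single i 1 + (1 - c) • π) (t : ℕ) :
    tvFin ((P ^ t) i) π = (1 - π i) * c ^ t := by
  have heigen : (Pi.single i 1 - π) ᵥ* P = c • (Pi.single i 1 - π) := by
    have hrow : Pi.single i 1 ᵥ* P = P i := single_one_vecMul i P
    rw [sub_vecMul, hrow, hπP, hi]
    module
  rw [tvFin_pow_row hπP, vecMul_pow_eq_smul heigen]
  simp only [Pi.smul_apply, smul_eq_mul, abs_mul, abs_of_nonneg (pow_nonneg hc t),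
    ← Finset.mul_sum, sum_abs_single_sub hπ hsum]
  ring

end TotalVariation

section IMH

variable {n : ℕ} {tgt prp : Fin n → ℝ}

/-- The probability that the IMH chain at state `i` rejects its proposal. -/
noncomputable def imhRejection (tgt prp : Fin n → ℝ) (i : Fin n) : ℝ :=
  ∑ k, prp k * max 0 (1 - (tgt k / prp k) / (tgt i / prp i))

theorem imhRejection_nonneg (hprp : ∀ i, 0 ≤ prp i) (i : Fin n) : 0 ≤ imhRejection tgt prp i :=
  Finset.sum_nonneg fun k _ => mul_nonneg (hprp k) (le_max_left _ _)

theorem imhRejection_eq_one_sub (hprp : ∀ i, prp i ≠ 0) (htgt_sum : ∑ i, tgt i = 1)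
    (hprp_sum : ∑ i, prp i = 1) {z : Fin n} (hz_pos : 0 < tgt z / prp z)
    (hz : ∀ i, tgt i / prp i ≤ tgt z / prp z) :
    imhRejection tgt prp z = 1 - 1 / (tgt z / prp z) := by
  have hterm (k : Fin n) :
      prp k * max 0 (1 - (tgt k / prp k) / (tgt z / prp z)) = prp k - tgt k / (tgt z / prp z) := by
    rw [max_eq_right (sub_nonneg.2 ((div_le_one hz_pos).2 (hz k))), mul_sub, mul_one,
      ← mul_div_assoc, mul_div_cancel₀ _ (hprp k)]
  simp only [imhRejection, hterm, Finset.sum_sub_distrib, ← Finset.sum_div, htgt_sum, hprp_sum]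

theorem imhMatrix_apply {i : Fin n} (hi : tgt i / prp i ≠ 0) (j : Fin n) :
    imhMatrix tgt prp i j = prp j * min 1 ((tgt j / prp j) / (tgt i / prp i)) +
      (Pi.single i (imhRejection tgt prp i) : Fin n → ℝ) j := by
  rcases eq_or_ne j i with rfl | hj
  · simp [imhMatrix, imhRejection, div_self hi]
  · simp [imhMatrix, hj]

theorem sum_imhMatrix_row (hprp_sum : ∑ i, prp i = 1) {i : Fin n} (hi : tgt i / prp i ≠ 0) :
    ∑ j, imhMatrix tgt prp i j = 1 := by
  have hmin_max (x : ℝ) : min 1 x + max 0 (1 - x) = 1 := by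
    rcases le_total 1 x with h | h <;> simp [h]
  simp only [imhMatrix_apply hi, Finset.sum_add_distrib, Finset.sum_pi_single',
    Finset.mem_univ, if_true, imhRejection]
  simp only [← Finset.sum_add_distrib, ← mul_add, hmin_max, mul_one, hprp_sum]

theorem imhMatrix_detailed_balance (htgt : ∀ i, 0 < tgt i) (hprp : ∀ i, 0 < prp i)
    (i j : Fin n) : tgt i * imhMatrix tgt prp i j = tgt j * imhMatrix tgt prp j i := by
  rcases eq_or_ne j i with rfl | hij
  · rfl
  have hflow {a b : Fin n} (hba : b ≠ a) : tgt a * imhMatrix tgt prp a b =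
      prp a * prp b * min (tgt a / prp a) (tgt b / prp b) := by
    have hw : 0 < tgt a / prp a := div_pos (htgt a) (hprp a)
    calc tgt a * imhMatrix tgt prp a b
        = prp a * prp b * (tgt a / prp a * min 1 ((tgt b / prp b) / (tgt a / prp a))) := by
          rw [imhMatrix_apply hw.ne', Pi.single_eq_of_ne hba, add_zero]
          nth_rewrite 1 [← mul_div_cancel₀ (tgt a) (hprp a).ne']
          ring
      _ = prp a * prp b * min (tgt a / prp a) (tgt b / prp b) := by
          rw [mul_min_of_nonneg _ _ hw.le, mul_one, mul_div_cancel₀ _ hw.ne']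
  rw [hflow hij, hflow hij.symm, min_comm, mul_comm (prp i)]

theorem vecMul_imhMatrix (htgt : ∀ i, 0 < tgt i) (hprp : ∀ i, 0 < prp i)
    (hprp_sum : ∑ i, prp i = 1) : tgt ᵥ* imhMatrix tgt prp = tgt := by
  ext j
  calc (tgt ᵥ* imhMatrix tgt prp) j = ∑ i, tgt i * imhMatrix tgt prp i j := rfl
    _ = ∑ i, tgt j * imhMatrix tgt prp j i :=
        Finset.sum_congr rfl fun i _ => imhMatrix_detailed_balance htgt hprp i j
    _ = tgt j := by
        rw [← Finset.mul_sum, sum_imhMatrix_row hprp_sum (div_pos (htgt j) (hprp j)).ne', mul_one]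

theorem div_le_imhMatrix (htgt : ∀ i, 0 < tgt i) (hprp : ∀ i, 0 < prp i) {w : ℝ}
    (hw : ∀ i, tgt i / prp i ≤ w) (i j : Fin n) : tgt j / w ≤ imhMatrix tgt prp i j := by
  have hwi : 0 < tgt i / prp i := div_pos (htgt i) (hprp i)
  have hwj : 0 < tgt j / prp j := div_pos (htgt j) (hprp j)
  have haccept : (tgt j / prp j) / w ≤ min 1 ((tgt j / prp j) / (tgt i / prp i)) :=
    le_min ((div_le_one (hwi.trans_le (hw i))).2 (hw j))
      (div_le_div_of_nonneg_left hwj.le hwi (hw i))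
  have hreject : (0 : Fin n → ℝ) ≤ Pi.single i (imhRejection tgt prp i) :=
    Pi.single_nonneg.2 (imhRejection_nonneg (fun k => (hprp k).le) i)
  calc tgt j / w = prp j * ((tgt j / prp j) / w) := by
        rw [← mul_div_assoc, mul_div_cancel₀ _ (hprp j).ne']
    _ ≤ prp j * min 1 ((tgt j / prp j) / (tgt i / prp i)) :=
        mul_le_mul_of_nonneg_left haccept (hprp j).le
    _ ≤ imhMatrix tgt prp i j := by
        rw [imhMatrix_apply hwi.ne']
        exact le_add_of_nonneg_right (hreject j)

theorem imhMatrix_row_of_forall_le (hprp : ∀ i, prp i ≠ 0) (htgt_sum : ∑ i, tgt i = 1)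
    (hprp_sum : ∑ i, prp i = 1) {z : Fin n} (hz_pos : 0 < tgt z / prp z)
    (hz : ∀ i, tgt i / prp i ≤ tgt z / prp z) :
    imhMatrix tgt prp z = imhRejection tgt prp z • Pi.single z 1 +
      (1 - imhRejection tgt prp z) • tgt := by
  ext j
  have hjump : prp j * min 1 ((tgt j / prp j) / (tgt z / prp z)) =
      (1 - imhRejection tgt prp z) * tgt j := by
    rw [min_eq_right ((div_le_one hz_pos).2 (hz j)), ← mul_div_assoc,
      mul_div_cancel₀ _ (hprp j), imhRejection_eq_one_sub hprp htgt_sum hprp_sum hz_pos hz]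
    ring
  rw [imhMatrix_apply hz_pos.ne', hjump, add_comm, ← Pi.single_smul]
  simp

theorem tvFin_imhMatrix_pow_le (htgt : ∀ i, 0 < tgt i) (hprp : ∀ i, 0 < prp i)
    (htgt_sum : ∑ i, tgt i = 1) (hprp_sum : ∑ i, prp i = 1) {w : ℝ}
    (hw : ∀ i, tgt i / prp i ≤ w) (t : ℕ) (i : Fin n) :
    tvFin ((imhMatrix tgt prp ^ t) i) tgt ≤ (1 - tgt i) * (1 - 1 / w) ^ t := by
  have hrow (k : Fin n) : ∑ j, imhMatrix tgt prp k j = 1 :=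
    sum_imhMatrix_row hprp_sum (div_pos (htgt k) (hprp k)).ne'
  simpa only [← Finset.sum_div, htgt_sum] using
    tvFin_pow_row_le hrow (div_le_imhMatrix htgt hprp hw) (fun k => (htgt k).le) htgt_sum
      (vecMul_imhMatrix htgt hprp hprp_sum) t i

theorem tvFin_imhMatrix_pow_eq (htgt : ∀ i, 0 < tgt i) (hprp : ∀ i, 0 < prp i)
    (htgt_sum : ∑ i, tgt i = 1) (hprp_sum : ∑ i, prp i = 1) {z : Fin n}
    (hz : ∀ i, tgt i / prp i ≤ tgt z / prp z) (t : ℕ) :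
    tvFin ((imhMatrix tgt prp ^ t) z) tgt =
      (1 - tgt z) * (1 - 1 / (tgt z / prp z)) ^ t := by
  have hz_pos : 0 < tgt z / prp z := div_pos (htgt z) (hprp z)
  have hprp_ne (k : Fin n) : prp k ≠ 0 := (hprp k).ne'
  rw [← imhRejection_eq_one_sub hprp_ne htgt_sum hprp_sum hz_pos hz]
  exact tvFin_pow_row_eq (imhRejection_nonneg (fun k => (hprp k).le) z) (fun k => (htgt k).le)
    htgt_sum (vecMul_imhMatrix htgt hprp hprp_sum)
    (imhMatrix_row_of_forall_le hprp_ne htgt_sum hprp_sum hz_pos hz) t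

theorem imh_finite_exact_rate_general (htgt : ∀ i, 0 < tgt i) (hprp : ∀ i, 0 < prp i)
    (htgt_sum : ∑ i, tgt i = 1) (hprp_sum : ∑ i, prp i = 1) {z : Fin n}
    (hz : ∀ i, tgt i / prp i ≤ tgt z / prp z) (t : ℕ) :
    (1 - tgt z) * (1 - 1 / (tgt z / prp z)) ^ t ≤
        (⨆ i, tvFin ((imhMatrix tgt prp ^ t) i) tgt)
      ∧ (⨆ i, tvFin ((imhMatrix tgt prp ^ t) i) tgt) ≤ (1 - 1 / (tgt z / prp z)) ^ t := by
  have : Nonempty (Fin n) := ⟨z⟩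
  have hrate : 0 ≤ 1 - 1 / (tgt z / prp z) := by
    rw [← imhRejection_eq_one_sub (fun k => (hprp k).ne') htgt_sum hprp_sum
      (div_pos (htgt z) (hprp z)) hz]
    exact imhRejection_nonneg (fun k => (hprp k).le) z
  constructor
  · exact le_ciSup_of_le (Set.finite_range _).bddAbove z
      (tvFin_imhMatrix_pow_eq htgt hprp htgt_sum hprp_sum hz t).ge
  · refine ciSup_le fun i => ?_
    exact (tvFin_imhMatrix_pow_le htgt hprp htgt_sum hprp_sum hz t i).trans
      (mul_le_of_le_one_left (pow_nonneg hrate t) (sub_le_self 1 (htgt i).le))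

end IMH

/-- for the IMH chain on the finite state space `{1, …, m}` (here `Fin (m+2)`,
`m + 2 ≥ 2`, state `1` being index `0`), with `w` nonincreasing so `w* = w₁`,
`(1 − π₁)(1 − 1/w*)ᵗ ≤ d(t) ≤ (1 − 1/w*)ᵗ` for every `t ≥ 1`. -/
theorem imh_finite_exact_rate (m : ℕ) (tgt prp : Fin (m + 2) → ℝ)
    (htgt_pos : ∀ i, 0 < tgt i) (hprp_pos : ∀ i, 0 < prp i)
    (htgt_sum : ∑ i, tgt i = 1) (hprp_sum : ∑ i, prp i = 1)
    (hmono : ∀ i j : Fin (m + 2), i ≤ j → tgt j / prp j ≤ tgt i / prp i) :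
    ∀ t : ℕ, 1 ≤ t →
      (1 - tgt 0) * (1 - 1 / (tgt 0 / prp 0)) ^ t ≤
          (⨆ i, tvFin ((imhMatrix tgt prp ^ t) i) tgt)
        ∧ (⨆ i, tvFin ((imhMatrix tgt prp ^ t) i) tgt) ≤ (1 - 1 / (tgt 0 / prp 0)) ^ t :=
  fun t _ => imh_finite_exact_rate_general htgt_pos hprp_pos htgt_sum hprp_sum
    (fun i => hmono 0 i (Fin.zero_le i)) t
end

section
/- Fix an integer K ≥ 2 and consider the Markov chain on {1, …, 2K} with transition matrix P(i,j) = 1/(2K) for j ≤ K with j ≠ i, P(i,j) = 0 for j > K with j ≠ i, P(i,i) = 1/2 + 1/(2K) if i ≤ K, and P(i,i) = 1/2 if i > K (this is the IMH chain with target uniform on {1,…,K} and proposal uniform on {1,…,2K}, for which w* = 2). Let π be uniform on {1,…,K}, i.e. π_j = 1/K for j ≤ K and π_j = 0 for j > K. Then for every t ≥ 1: ‖P^t(i,·) − π‖_TV = (1 − 1/K)·(1/2)^t for every i ≤ K, and ‖P^t(j,·) − π‖_TV = (1/2)^t for every j > K; hence max_i ‖P^t(i,·) − π‖_TV = (1 −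 1/w*)^t with w* = 2. -/
/-- the explicit IMH chain with target uniform on `{1,…,K}` and proposal
uniform on `{1,…,2K}` (states indexed by `Fin (2K)`, state `j` of `{1,…,2K}` being
index `j − 1`). -/
noncomputable def halfUnifChain (K : ℕ) : Matrix (Fin (2 * K)) (Fin (2 * K)) ℝ :=
  Matrix.of fun i j =>
    if (j : ℕ) < K then (if j = i then 1 / 2 + 1 / (2 * (K : ℝ)) else 1 / (2 * (K : ℝ)))
    else (if j = i then 1 / 2 else 0)

/-- The uniform pmf on the first `K` of the `2K` states. -/
noncomputable def halfUnifTgt (K : ℕ) : Fin (2 * K) → ℝ :=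
  fun j => if (j : ℕ) < K then 1 / (K : ℝ) else 0

/-!
In one step the chain stays put with probability `1/2` and otherwise draws its next state from the
target `π`. Two such moves with holding probabilities `a` and `b` compose to one with holding
probability `a * b`, so the `t`-step law started at `i` is `π + (1/2)^t • (δ_i - π)`. Its distance
to `π` is `(1/2)^t` times that of `δ_i` to `π`, which is `1 - π i`, and this is largest off the
support of `π`.
-/

lemma isIdempotentElem_vecMulVec {ι R : Type*} [Fintype ι] [Semiring R] {v w : ι → R}
    (h : w ⬝ᵥ v = 1) : IsIdempotentElem (Matrix.vecMulVec v w) := by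
  rw [IsIdempotentElem, Matrix.vecMulVec_mul_vecMulVec, h, one_smul]

section RefreshMatrix

variable {ι R : Type*} [DecidableEq ι] [CommRing R]

/-- The transition matrix of the chain that stays put with probability `a` and otherwise draws its
next state from `p`, whatever the current state. The entries lie in any commutative ring, since the
composition law `refreshMatrix_mul` is purely algebraic. -/
def refreshMatrix (p : ι → R) (a : R) : Matrix ι ι R :=
  a • 1 + (1 - a) • Matrix.vecMulVec 1 p

lemma refreshMatrix_apply (p : ι → R) (a : R) (i : ι) :
    refreshMatrix p a i = p + a • (Pi.single i 1 - p) := by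
  ext j
  simp only [refreshMatrix, Matrix.add_apply, Matrix.smul_apply, Matrix.one_eq_pi_single,
    Matrix.vecMulVec_apply, Pi.one_apply, Pi.add_apply, Pi.sub_apply, Pi.smul_apply, smul_eq_mul]
  ring

lemma refreshMatrix_one (p : ι → R) : refreshMatrix p 1 = 1 := by
  simp [refreshMatrix]

variable [Fintype ι] {p : ι → R}

lemma refreshMatrix_mul (hp : ∑ i, p i = 1) (a b : R) :
    refreshMatrix p a * refreshMatrix p b = refreshMatrix p (a * b) := by
  have idem : IsIdempotentElem (Matrix.vecMulVec 1 p) :=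
    isIdempotentElem_vecMulVec ((dotProduct_one p).trans hp)
  simp only [refreshMatrix, add_mul, mul_add, smul_mul_smul_comm, one_mul, mul_one, idem.eq]
  module

lemma refreshMatrix_pow (hp : ∑ i, p i = 1) (a : R) (t : ℕ) :
    refreshMatrix p a ^ t = refreshMatrix p (a ^ t) := by
  induction t with
  | zero => rw [pow_zero, pow_zero, refreshMatrix_one]
  | succ t ih => rw [pow_succ, pow_succ, ih, refreshMatrix_mul hp]

end RefreshMatrix

section TotalVariation

variable {n : ℕ}

lemma tvFin_add_smul_sub (μ ν : Fin n → ℝ) (a : ℝ) :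
    tvFin (ν + a • (μ - ν)) ν = |a| * tvFin μ ν := by
  simp only [tvFin, Pi.add_apply, Pi.smul_apply, Pi.sub_apply, smul_eq_mul, add_sub_cancel_left,
    abs_mul, ← Finset.mul_sum]
  ring

variable {p : Fin n → ℝ}

lemma tvFin_single_one (hp : p ∈ stdSimplex ℝ (Fin n)) (i : Fin n) :
    tvFin (Pi.single i 1) p = 1 - p i := by
  have at_start : |(Pi.single i 1 : Fin n → ℝ) i - p i| = 1 - p i := by
    rw [Pi.single_eq_same, abs_of_nonneg (sub_nonneg.2 (mem_Icc_of_mem_stdSimplex hp i).2)]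
  have elsewhere : ∀ j ∈ ({i}ᶜ : Finset (Fin n)), |(Pi.single i 1 : Fin n → ℝ) j - p j| = p j := by
    intro j hj
    rw [Pi.single_eq_of_ne (by simpa using hj), zero_sub, abs_neg, abs_of_nonneg (hp.1 j)]
  have mass_elsewhere : ∑ j ∈ {i}ᶜ, p j = 1 - p i := by
    rw [eq_sub_iff_add_eq', ← Fintype.sum_eq_add_sum_compl, hp.2]
  rw [tvFin, Fintype.sum_eq_add_sum_compl i, at_start, Finset.sum_congr rfl elsewhere,
    mass_elsewhere]
  ring

lemma tvFin_refreshMatrix (hp : p ∈ stdSimplex ℝ (Fin n)) (a : ℝ) (i : Fin n) :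
    tvFin (refreshMatrix p a i) p = |a| * (1 - p i) := by
  rw [refreshMatrix_apply, tvFin_add_smul_sub, tvFin_single_one hp]

lemma iSup_tvFin_refreshMatrix (hp : p ∈ stdSimplex ℝ (Fin n)) (a : ℝ) {i₀ : Fin n}
    (hi₀ : p i₀ = 0) : ⨆ i, tvFin (refreshMatrix p a i) p = |a| := by
  refine IsGreatest.csSup_eq ⟨⟨i₀, ?_⟩, Set.forall_mem_range.2 fun i => ?_⟩
  · simp only [tvFin_refreshMatrix hp, hi₀, sub_zero, mul_one]
  · rw [tvFin_refreshMatrix hp]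
    exact mul_le_of_le_one_right (abs_nonneg a) (sub_le_self 1 (hp.1 i))

end TotalVariation

section HalfUniform

variable {K : ℕ}

lemma halfUnifTgt_of_lt {i : Fin (2 * K)} (hi : (i : ℕ) < K) : halfUnifTgt K i = 1 / K :=
  if_pos hi

lemma halfUnifTgt_of_le {i : Fin (2 * K)} (hi : K ≤ (i : ℕ)) : halfUnifTgt K i = 0 :=
  if_neg hi.not_gt

lemma halfUnifTgt_mem_stdSimplex (hK : K ≠ 0) : halfUnifTgt K ∈ stdSimplex ℝ (Fin (2 * K)) := by
  constructor
  · intro i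
    unfold halfUnifTgt
    positivity
  · have card_support : ({j | (j : ℕ) < K} : Finset (Fin (2 * K))).card = K := by
      rw [Fin.card_filter_val_lt, min_eq_right (Nat.le_mul_of_pos_left K two_pos)]
    simp only [halfUnifTgt, ← Finset.sum_filter, Finset.sum_const, card_support, nsmul_eq_mul]
    exact mul_one_div_cancel (Nat.cast_ne_zero.2 hK)

lemma halfUnifChain_eq_refreshMatrix (K : ℕ) :
    halfUnifChain K = refreshMatrix (halfUnifTgt K) (1 / 2) := by
  ext i j
  simp only [halfUnifChain, halfUnifTgt, refreshMatrix_apply, Matrix.of_apply, Pi.add_apply,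
    Pi.smul_apply, Pi.sub_apply, Pi.single_apply, smul_eq_mul]
  split_ifs <;> ring

lemma halfUnifChain_pow (hK : K ≠ 0) (t : ℕ) :
    halfUnifChain K ^ t = refreshMatrix (halfUnifTgt K) ((1 / 2) ^ t) := by
  rw [halfUnifChain_eq_refreshMatrix, refreshMatrix_pow (halfUnifTgt_mem_stdSimplex hK).2]

end HalfUniform

/-- for every `t ≥ 1`, `‖Pᵗ(i,·) − π‖_TV = (1 − 1/K)(1/2)ᵗ` for `i ≤ K`,
`‖Pᵗ(j,·) − π‖_TV = (1/2)ᵗ` for `j > K`; hence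
`max_i ‖Pᵗ(i,·) − π‖_TV = (1 − 1/w*)ᵗ` with `w* = 2`. -/
theorem imh_uniform_example_tv (K : ℕ) (hK : 2 ≤ K) :
    ∀ t : ℕ, 1 ≤ t →
      (∀ i : Fin (2 * K), (i : ℕ) < K →
          tvFin ((halfUnifChain K ^ t) i) (halfUnifTgt K) = (1 - 1 / (K : ℝ)) * (1 / 2) ^ t)
        ∧ (∀ j : Fin (2 * K), K ≤ (j : ℕ) →
          tvFin ((halfUnifChain K ^ t) j) (halfUnifTgt K) = (1 / 2) ^ t)
        ∧ (⨆ i, tvFin ((halfUnifChain K ^ t) i) (halfUnifTgt K)) = (1 - 1 / (2 : ℝ)) ^ t := by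
  intro t _
  have hK₀ : K ≠ 0 := by omega
  have tgt_mem := halfUnifTgt_mem_stdSimplex hK₀
  have abs_half_pow : |(1 / 2 : ℝ) ^ t| = (1 / 2) ^ t := abs_of_nonneg (by positivity)
  rw [halfUnifChain_pow hK₀]
  refine ⟨fun i hi => ?_, fun j hj => ?_, ?_⟩
  · rw [tvFin_refreshMatrix tgt_mem, abs_half_pow, halfUnifTgt_of_lt hi, mul_comm]
  · rw [tvFin_refreshMatrix tgt_mem, abs_half_pow, halfUnifTgt_of_le hj, sub_zero, mul_one]
  · have tgt_eq_zero : halfUnifTgt K ⟨K, by omega⟩ = 0 := halfUnifTgt_of_le le_rfl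
    rw [iSup_tvFin_refreshMatrix tgt_mem _ tgt_eq_zero, abs_half_pow, sub_half]
end

section
/- Let A be an n×n real matrix with A·u_j = λ_j·u_j for j = 1, …, n, where u_1, …, u_n form a basis of ℝⁿ, and let u ∈ ℝⁿ. Set B = A + u_n·uᵀ. Then the characteristic polynomial of B equals (X − λ_n − uᵀu_n)·∏_{j=1}^{n−1}(X − λ_j), so the eigenvalues of B, counted with multiplicity, are λ_1, …, λ_{n−1}, λ_n + uᵀu_n; moreover B·u_n = (λ_n + uᵀu_n)·u_n. -/
/-!
If `A *ᵥ v = μ • v` and `B = A + v uᵀ`, then `μI + B = A + (μI + v uᵀ)` and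
`μI * B = A * (μI + v uᵀ)`. Hence `(XI - μI)(XI - B) = (XI - A)(XI - μI - v uᵀ)`, and taking
determinants gives Brauer's identity `(X - μ) χ_B = (X - μ - uᵀv) χ_A`. When `v` belongs to a
family of linearly independent eigenvectors, `χ_A` splits accordingly and the factor of `v` cancels.
-/

section

open Finset Matrix Polynomial

variable {R ι : Type*} [CommRing R] [Fintype ι] {A : Matrix ι ι R} {v : ι → R} {μ : R}

theorem add_vecMulVec_mulVec_eq_smul (h : A *ᵥ v = μ • v) (u : ι → R) :
    (A + vecMulVec v u) *ᵥ v = (μ + u ⬝ᵥ v) • v := by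
  rw [add_mulVec, h, vecMulVec_mulVec, op_smul_eq_smul, add_smul]

variable [DecidableEq ι]

theorem charmatrix_mul_charmatrix (A B : Matrix ι ι R) :
    A.charmatrix * B.charmatrix =
      scalar ι X * scalar ι X - scalar ι X * (A + B).map C + (A * B).map C := by
  have hcomm : A.map C * scalar ι X = scalar ι X * A.map C :=
    (scalar_comm X (fun _ ↦ Commute.all _ _) _).symm
  simp only [charmatrix, RingHom.mapMatrix_apply, Matrix.map_mul, Matrix.map_add C C.map_add,
    sub_mul, mul_sub, mul_add, hcomm]
  abel

theorem charpoly_mul_charpoly_eq_of_add_eq_of_mul_eq {A B A' B' : Matrix ι ι R}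
    (hadd : A + B = A' + B') (hmul : A * B = A' * B') :
    A.charpoly * B.charpoly = A'.charpoly * B'.charpoly := by
  simp only [charpoly, ← det_mul, charmatrix_mul_charmatrix, hadd, hmul]

theorem charpoly_scalar (μ : R) : (scalar ι μ).charpoly = (X - C μ) ^ Fintype.card ι := by
  rw [scalar_apply, charpoly_diagonal, prod_const, card_univ]

theorem charpoly_scalar_add_vecMulVec_mul_X_sub_C (μ : R) (v u : ι → R) :
    (scalar ι μ + vecMulVec v u).charpoly * (X - C μ) =
      (X - C μ) ^ Fintype.card ι * (X - C (μ + u ⬝ᵥ v)) := by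
  cases isEmpty_or_nonempty ι
  · simp
  have hshift : (scalar ι μ + vecMulVec v u).charpoly =
      (vecMulVec v u).charpoly.comp (X - C μ) := by
    simpa only [map_neg, sub_neg_eq_add, ← sub_eq_add_neg, add_comm (scalar ι μ)] using
      charpoly_sub_scalar (vecMulVec v u) (-μ)
  have hpow : (X - C μ) ^ (Fintype.card ι - 1) * (X - C μ) = (X - C μ) ^ Fintype.card ι :=
    pow_sub_one_mul Fintype.card_ne_zero _
  rw [hshift, charpoly_vecMulVec, smul_eq_C_mul, sub_comp, mul_comp, C_comp, X_pow_comp, X_pow_comp,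
    C_add, dotProduct_comm]
  linear_combination -C (u ⬝ᵥ v) * hpow

theorem charpoly_add_vecMulVec_mul_X_sub_C (h : A *ᵥ v = μ • v) (u : ι → R) :
    (A + vecMulVec v u).charpoly * (X - C μ) = A.charpoly * (X - C (μ + u ⬝ᵥ v)) := by
  have hmul : scalar ι μ * (A + vecMulVec v u) = A * (scalar ι μ + vecMulVec v u) := by
    rw [mul_add, mul_add, mul_vecMulVec A, h, scalar_comm μ (Commute.all μ) A, smul_vecMulVec,
      scalar_apply, ← smul_eq_diagonal_mul]
  have hcharpoly : (X - C μ) ^ Fintype.card ι * (A + vecMulVec v u).charpoly =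
      A.charpoly * (scalar ι μ + vecMulVec v u).charpoly := by
    rw [← charpoly_scalar]
    exact charpoly_mul_charpoly_eq_of_add_eq_of_mul_eq (add_left_comm _ _ _) hmul
  refine ((monic_X_sub_C μ).pow (Fintype.card ι)).isRegular.left.eq_iff.mp ?_
  rw [← mul_assoc, hcharpoly, mul_assoc, charpoly_scalar_add_vecMulVec_mul_X_sub_C, mul_left_comm]

theorem charpoly_eq_of_mul_eq_mul {A B P : Matrix ι ι R} (hP : P.Nonsingular)
    (h : A * P = P * B) : A.charpoly = B.charpoly := by
  have hcharmatrix : A.charmatrix * P.map C = P.map C * B.charmatrix := by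
    simp only [charmatrix, RingHom.mapMatrix_apply, sub_mul, mul_sub, ← Matrix.map_mul, h,
      scalar_comm X (fun _ ↦ Commute.all _ _) (P.map C)]
  have hdet : A.charpoly * C P.det = B.charpoly * C P.det := by
    rw [charpoly, charpoly, RingHom.map_det, RingHom.mapMatrix_apply, ← det_mul, hcharmatrix,
      det_mul, mul_comm]
  ext k
  rw [← mul_cancel_right_mem_nonZeroDivisors (nonsingular_iff_det_mem_nonZeroDivisors.mp hP),
    ← coeff_mul_C, hdet, coeff_mul_C]

variable {U : ι → ι → R} {lam : ι → R}

theorem charpoly_eq_prod_X_sub_C_of_linearIndependent (heig : ∀ j, A *ᵥ U j = lam j • U j)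
    (hU : LinearIndependent R U) : A.charpoly = ∏ j, (X - C (lam j)) := by
  have hmul : A * (of U)ᵀ = (of U)ᵀ * diagonal lam := by
    ext i j
    rw [mul_diagonal, mul_comm]
    exact congr_fun (heig j) i
  rw [charpoly_eq_of_mul_eq_mul (.of_linearIndependent_col hU) hmul, charpoly_diagonal]

theorem rank_one_perturbation_general (heig : ∀ j, A *ᵥ U j = lam j • U j)
    (hU : LinearIndependent R U) (k : ι) (u : ι → R) :
    (A + vecMulVec (U k) u).charpoly =
        (X - C (lam k + u ⬝ᵥ U k)) * ∏ j ∈ {k}ᶜ, (X - C (lam j)) ∧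
      (A + vecMulVec (U k) u) *ᵥ U k = (lam k + u ⬝ᵥ U k) • U k := by
  refine ⟨(monic_X_sub_C (lam k)).isRegular.right.eq_iff.mp ?_,
    add_vecMulVec_mulVec_eq_smul (heig k) u⟩
  rw [charpoly_add_vecMulVec_mul_X_sub_C (heig k),
    charpoly_eq_prod_X_sub_C_of_linearIndependent heig hU, Fintype.prod_eq_prod_compl_mul k]
  ring

end

/-- rank-one perturbation: if `A·u_j = λ_j·u_j` for `j = 1, …, n` where
`u_1, …, u_n` form a basis of `ℝⁿ`, and `B = A + u_n·uᵀ`, then the characteristic polynomial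
of `B` equals `(X − λ_n − uᵀu_n)·∏_{j=1}^{n−1}(X − λ_j)` (so the eigenvalues of `B`, with
multiplicity, are `λ_1, …, λ_{n−1}, λ_n + uᵀu_n`), and moreover
`B·u_n = (λ_n + uᵀu_n)·u_n`. -/
theorem rank_one_perturbation (n : ℕ) (A : Matrix (Fin (n + 1)) (Fin (n + 1)) ℝ)
    (lam : Fin (n + 1) → ℝ) (U : Fin (n + 1) → (Fin (n + 1) → ℝ))
    (heig : ∀ j, A.mulVec (U j) = lam j • U j)
    (hbasis : LinearIndependent ℝ U)
    (u : Fin (n + 1) → ℝ) :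
    (A + Matrix.vecMulVec (U (Fin.last n)) u).charpoly =
        (Polynomial.X - Polynomial.C (lam (Fin.last n) + ∑ i, u i * U (Fin.last n) i)) *
          ∏ j : Fin n, (Polynomial.X - Polynomial.C (lam j.castSucc))
      ∧ (A + Matrix.vecMulVec (U (Fin.last n)) u).mulVec (U (Fin.last n)) =
          (lam (Fin.last n) + ∑ i, u i * U (Fin.last n) i) • U (Fin.last n) := by
  simpa only [dotProduct, ← Fin.image_castSucc,
    Finset.prod_image (Fin.castSucc_injective n).injOn] using
    rank_one_perturbation_general heig hbasis (Fin.last n) u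
end

section
/- For the IMH chain on the finite state space X = {1, …, m}, assume additionally that w₁ > 1 (equivalently π ≠ p). Then there exists a constant c > 0, depending only on π and p, such that for every state i and every t ≥ 1, ‖P^t(i,·) − π‖_TV ≥ c·(1 − 1/w₁)^t. -/
/-!
Let `s` be a state of maximal weight `w_s` and `λ = 1 - 1/w_s`. A proposal to move to `s` is always
accepted, and a proposal made at `s` is rejected with probability exactly `λ`, so the column of `P`
at `s` is `p_s + λ 1_s`. As `p_s = (1 - λ) π_s`, the function `1_s - π_s` is an eigenfunction of `P`
with eigenvalue `λ`, whence `P^t(i,s) - π_s = λ^t (1_s(i) - π_s)` exactly. The discrepancy at the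
single state `s` bounds the total variation distance from below.
-/

open Matrix

theorem abs_sub_apply_le_tvFin {n : ℕ} {μ ν : Fin n → ℝ} (h : ∑ j, μ j = ∑ j, ν j) (s : Fin n) :
    |μ s - ν s| ≤ tvFin μ ν := by
  have hsum : (μ s - ν s) + ∑ j ∈ Finset.univ.erase s, (μ j - ν j) = 0 := by
    rw [Finset.add_sum_erase _ (fun j => μ j - ν j) (Finset.mem_univ s), Finset.sum_sub_distrib, h,
      sub_self]
  have hs : |μ s - ν s| ≤ ∑ j ∈ Finset.univ.erase s, |μ j - ν j| := by
    rw [eq_neg_of_add_eq_zero_left hsum, abs_neg]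
    exact Finset.abs_sum_le_sum_abs _ _
  rw [tvFin, ← Finset.add_sum_erase _ _ (Finset.mem_univ s)]
  linarith

theorem pow_mulVec_of_mulVec_eq_smul {ι R : Type*} [Fintype ι] [DecidableEq ι] [CommSemiring R]
    {A : Matrix ι ι R} {f : ι → R} {c : R} (h : A *ᵥ f = c • f) (t : ℕ) :
    (A ^ t) *ᵥ f = c ^ t • f := by
  induction t with
  | zero => simp
  | succ t ih => rw [pow_succ, ← mulVec_mulVec, h, mulVec_smul, ih, smul_smul, pow_succ']

/-- The probability that the IMH chain rejects the proposal made at state `i`. Proposing `i` itself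
counts as an acceptance: the term `k = i` vanishes when the weight of `i` is nonzero. -/
noncomputable def imhRejectProb {n : ℕ} (tgt prp : Fin n → ℝ) (i : Fin n) : ℝ :=
  ∑ k, prp k * max 0 (1 - (tgt k / prp k) / (tgt i / prp i))

section

variable {n : ℕ} {tgt prp : Fin n → ℝ}

theorem imhMatrix_apply_eq_accept_add_reject {i : Fin n} (hi : tgt i / prp i ≠ 0) (j : Fin n) :
    imhMatrix tgt prp i j = prp j * min 1 ((tgt j / prp j) / (tgt i / prp i)) +
      if j = i then imhRejectProb tgt prp i else 0 := by
  rw [imhMatrix, of_apply]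
  split_ifs with hj
  · rw [hj, div_self hi, min_self, mul_one, imhRejectProb]
  · rw [add_zero]

theorem imhMatrix_mem_rowStochastic (htgt : ∀ i, 0 < tgt i) (hprp : ∀ i, 0 < prp i)
    (hsum : ∑ i, prp i = 1) : imhMatrix tgt prp ∈ rowStochastic ℝ (Fin n) := by
  have hw (i : Fin n) : 0 < tgt i / prp i := div_pos (htgt i) (hprp i)
  refine mem_rowStochastic_iff_sum.2 ⟨fun i j => ?_, fun i => ?_⟩
  · have hreject : 0 ≤ imhRejectProb tgt prp i :=
      Finset.sum_nonneg fun k _ => mul_nonneg (hprp k).le (le_max_left _ _)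
    have haccept : 0 ≤ prp j * min 1 ((tgt j / prp j) / (tgt i / prp i)) :=
      mul_nonneg (hprp j).le (le_min zero_le_one (div_pos (hw j) (hw i)).le)
    rw [imhMatrix_apply_eq_accept_add_reject (hw i).ne']
    split_ifs <;> linarith
  · have haccept_add_reject (x : ℝ) : min 1 x + max 0 (1 - x) = 1 := by
      rcases le_total 1 x with hx | hx <;> simp [hx]
    calc ∑ j, imhMatrix tgt prp i j
        = ∑ j, prp j * (min 1 ((tgt j / prp j) / (tgt i / prp i)) +
            max 0 (1 - (tgt j / prp j) / (tgt i / prp i))) := by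
          simp only [imhMatrix_apply_eq_accept_add_reject (hw i).ne', imhRejectProb, mul_add,
            Finset.sum_add_distrib, Finset.sum_ite_eq', Finset.mem_univ, if_true]
      _ = 1 := by simp only [haccept_add_reject, mul_one, hsum]

theorem imhRejectProb_of_weight_le {s : Fin n} (hs : 0 < tgt s / prp s) (hprp : ∀ i, prp i ≠ 0)
    (htgt_sum : ∑ i, tgt i = 1) (hprp_sum : ∑ i, prp i = 1)
    (hmax : ∀ i, tgt i / prp i ≤ tgt s / prp s) :
    imhRejectProb tgt prp s = 1 - 1 / (tgt s / prp s) := by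
  have hterm (k : Fin n) : prp k * max 0 (1 - (tgt k / prp k) / (tgt s / prp s)) =
      prp k - tgt k / (tgt s / prp s) := by
    rw [max_eq_right (sub_nonneg.2 ((div_le_one hs).2 (hmax k))), mul_sub, mul_one,
      ← mul_div_assoc, mul_div_cancel₀ _ (hprp k)]
  simp only [imhRejectProb, hterm, Finset.sum_sub_distrib, ← Finset.sum_div, htgt_sum, hprp_sum]

theorem imhMatrix_col_of_weight_le {s : Fin n} (htgt : ∀ i, 0 < tgt i) (hprp : ∀ i, 0 < prp i)
    (htgt_sum : ∑ i, tgt i = 1) (hprp_sum : ∑ i, prp i = 1)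
    (hmax : ∀ i, tgt i / prp i ≤ tgt s / prp s) :
    (imhMatrix tgt prp).col s = prp s • 1 + (1 - 1 / (tgt s / prp s)) • Pi.single s 1 := by
  have hw (i : Fin n) : 0 < tgt i / prp i := div_pos (htgt i) (hprp i)
  ext i
  rw [col_apply, imhMatrix_apply_eq_accept_add_reject (hw i).ne',
    min_eq_left ((one_le_div (hw i)).2 (hmax i))]
  obtain rfl | hi := eq_or_ne s i
  · simp [imhRejectProb_of_weight_le (hw s) (fun k => (hprp k).ne') htgt_sum hprp_sum hmax]
  · simp [hi, hi.symm]

theorem imhMatrix_mulVec_single_sub_of_weight_le {s : Fin n} (htgt : ∀ i, 0 < tgt i)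
    (hprp : ∀ i, 0 < prp i) (htgt_sum : ∑ i, tgt i = 1) (hprp_sum : ∑ i, prp i = 1)
    (hmax : ∀ i, tgt i / prp i ≤ tgt s / prp s) :
    imhMatrix tgt prp *ᵥ (Pi.single s 1 - tgt s • 1) =
      (1 - 1 / (tgt s / prp s)) • (Pi.single s 1 - tgt s • 1) := by
  have hprp_s : prp s = 1 / (tgt s / prp s) * tgt s := by
    rw [one_div_div, div_mul_cancel₀ _ (htgt s).ne']
  rw [mulVec_sub, mulVec_smul, mulVec_single_one,
    one_vecMul_of_mem_rowStochastic (imhMatrix_mem_rowStochastic htgt hprp hprp_sum),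
    imhMatrix_col_of_weight_le htgt hprp htgt_sum hprp_sum hmax]
  linear_combination (norm := module) hprp_s • (1 : Fin n → ℝ)

theorem imhMatrix_pow_apply_sub_of_weight_le {s : Fin n} (htgt : ∀ i, 0 < tgt i)
    (hprp : ∀ i, 0 < prp i) (htgt_sum : ∑ i, tgt i = 1) (hprp_sum : ∑ i, prp i = 1)
    (hmax : ∀ i, tgt i / prp i ≤ tgt s / prp s) (i : Fin n) (t : ℕ) :
    (imhMatrix tgt prp ^ t) i s - tgt s =
      (1 - 1 / (tgt s / prp s)) ^ t * ((if i = s then 1 else 0) - tgt s) := by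
  have hone : (imhMatrix tgt prp ^ t) *ᵥ 1 = 1 :=
    one_vecMul_of_mem_rowStochastic
      (pow_mem (imhMatrix_mem_rowStochastic htgt hprp hprp_sum) t)
  have heigen := pow_mulVec_of_mulVec_eq_smul
    (imhMatrix_mulVec_single_sub_of_weight_le htgt hprp htgt_sum hprp_sum hmax) t
  rw [mulVec_sub, mulVec_smul, mulVec_single_one, hone] at heigen
  simpa [Pi.single_apply] using congrFun heigen i

end

theorem imh_finite_uniform_lower_bound_general {n : ℕ} {tgt prp : Fin n → ℝ} {s : Fin n}
    (htgt : ∀ i, 0 < tgt i) (hprp : ∀ i, 0 < prp i)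
    (htgt_sum : ∑ i, tgt i = 1) (hprp_sum : ∑ i, prp i = 1)
    (hmax : ∀ i, tgt i / prp i ≤ tgt s / prp s) (i : Fin n) (t : ℕ) :
    min (tgt s) (1 - tgt s) * (1 - 1 / (tgt s / prp s)) ^ t ≤
      tvFin ((imhMatrix tgt prp ^ t) i) tgt := by
  have htgt_le : tgt s ≤ 1 :=
    htgt_sum ▸ Finset.single_le_sum (fun j _ => (htgt j).le) (Finset.mem_univ s)
  have hmin : min (tgt s) (1 - tgt s) ≤ |(if i = s then (1 : ℝ) else 0) - tgt s| := by
    split_ifs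
    · exact (min_le_right _ _).trans (le_abs_self _)
    · rw [zero_sub, abs_neg]
      exact (min_le_left _ _).trans (le_abs_self _)
  have hrow : ∑ j, (imhMatrix tgt prp ^ t) i j = ∑ j, tgt j := by
    rw [htgt_sum]
    exact sum_row_of_mem_rowStochastic
      (pow_mem (imhMatrix_mem_rowStochastic htgt hprp hprp_sum) t) i
  calc min (tgt s) (1 - tgt s) * (1 - 1 / (tgt s / prp s)) ^ t
      ≤ min (tgt s) (1 - tgt s) * |(1 - 1 / (tgt s / prp s)) ^ t| :=
        mul_le_mul_of_nonneg_left (le_abs_self _) (le_min (htgt s).le (sub_nonneg.2 htgt_le))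
    _ ≤ |(if i = s then (1 : ℝ) else 0) - tgt s| * |(1 - 1 / (tgt s / prp s)) ^ t| :=
        mul_le_mul_of_nonneg_right hmin (abs_nonneg _)
    _ = |(imhMatrix tgt prp ^ t) i s - tgt s| := by
        rw [imhMatrix_pow_apply_sub_of_weight_le htgt hprp htgt_sum hprp_sum hmax, abs_mul,
          mul_comm]
    _ ≤ tvFin ((imhMatrix tgt prp ^ t) i) tgt := abs_sub_apply_le_tvFin hrow s

/-- for the IMH chain on `{1, …, m}` (here `Fin (m+2)`, state `1` being
index `0`) with `w₁ > 1`, there is a constant `c > 0` (depending only on `π` and `p`) such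
that `‖Pᵗ(i,·) − π‖_TV ≥ c·(1 − 1/w₁)ᵗ` for every state `i` and every `t ≥ 1`. -/
theorem imh_finite_uniform_lower_bound (m : ℕ) (tgt prp : Fin (m + 2) → ℝ)
    (htgt_pos : ∀ i, 0 < tgt i) (hprp_pos : ∀ i, 0 < prp i)
    (htgt_sum : ∑ i, tgt i = 1) (hprp_sum : ∑ i, prp i = 1)
    (hmono : ∀ i j : Fin (m + 2), i ≤ j → tgt j / prp j ≤ tgt i / prp i)
    (hw : 1 < tgt 0 / prp 0) :
    ∃ c : ℝ, 0 < c ∧ ∀ (i : Fin (m + 2)) (t : ℕ), 1 ≤ t →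
      c * (1 - 1 / (tgt 0 / prp 0)) ^ t ≤ tvFin ((imhMatrix tgt prp ^ t) i) tgt := by
  have hlt : tgt 0 < 1 := htgt_sum ▸ Finset.single_lt_sum Fin.zero_ne_one.symm (Finset.mem_univ 0)
    (Finset.mem_univ 1) (htgt_pos 1) fun j _ _ => (htgt_pos j).le
  exact ⟨min (tgt 0) (1 - tgt 0), lt_min (htgt_pos 0) (sub_pos.2 hlt), fun i t _ =>
    imh_finite_uniform_lower_bound_general htgt_pos hprp_pos htgt_sum hprp_sum
      (fun j => hmono 0 j j.zero_le) i t⟩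
end
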